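/- Let δ be an increment function of size n and let [P,Q] be a linear interval of height k ≥ 2 in the alt-Tamari poset Tam^δ_n. Then [P,Q] is a left interval or a right interval: either P = A d^k C B and Q = A C d^k B where C is the δ-excursion in P of its first up step, or P = A d C_1⋯C_k B and Q = A C_1⋯C_k d B where each C_j is the δ-excursion in P of its first up step. -/

import Mathlib

/-!
Common definitions.  A letter of a word is a `Bool`: `true` is an up step `u`,
`false` is a down step `d`.  Positions in words are 0-based.
-/

/-- A (possibly empty) Dyck word: as many `u`'s as `d`'s, and every
prefix has at least as many `u`'s as `d`'s. -/
def IsDyckPath (w : List Bool) : Prop :=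
  w.count true = w.count false ∧ ∀ p, p <+: w → p.count false ≤ p.count true

/-- A Dyck word of size `n`: `n` up steps, `n` down steps, every prefix has
at least as many `u`'s as `d`'s. -/
def IsDyckWord (n : ℕ) (w : List Bool) : Prop :=
  w.count true = n ∧ w.count false = n ∧ ∀ p, p <+: w → p.count false ≤ p.count true

/-- The set of Dyck words of size `n`. -/
def DyckSet (n : ℕ) : Set (List Bool) := {w | IsDyckWord n w}

/-- An increment function: a `{0,1}`-valued function (the paper's `δ : {1,…,n} → {0,1}`;
only the values on `{1,…,n}` are ever used). -/
def IsIncFun (δ : ℕ → ℤ) : Prop := ∀ i, δ i = 0 ∨ δ i = 1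

/-- The 0-based position in `w` of the `i`-th up step `u_i` (`i` is 1-based). -/
def upPos (w : List Bool) (i : ℕ) : ℕ :=
  ((List.range w.length).filter fun q => w.getD q false = true).getD (i - 1) 0

/-- `h_i(w)`: the (1-based, between 1 and 2n) position of the up step `u_i` in `w`. -/
def hpos (w : List Bool) (i : ℕ) : ℕ := upPos w i + 1

/-- The change of δ-altitude produced by the letter at position `q` of `w`:
the up step `u_i` contributes `δ i`, a down step contributes `-1`. -/
def stepVal (δ : ℕ → ℤ) (w : List Bool) (q : ℕ) : ℤ :=
  if w.getD q false = true then δ ((w.take (q + 1)).count true) else -1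

/-- The δ-elevation of the factor of `w` occupying positions `a, …, b-1`. -/
def elev (δ : ℕ → ℤ) (w : List Bool) (a b : ℕ) : ℤ :=
  ∑ q ∈ Finset.Ico a b, stepVal δ w q

/-- `C` is the δ-excursion of the up step of `w` at position `p`:
the smallest (nonempty) factor of `w` starting at `p` whose δ-elevation is `0`. -/
def IsDeltaExcAt (δ : ℕ → ℤ) (w : List Bool) (p : ℕ) (C : List Bool) : Prop :=
  w.getD p false = true ∧
  ∃ m, 0 < m ∧ p + m ≤ w.length ∧ C = (w.drop p).take m ∧
    elev δ w p (p + m) = 0 ∧ ∀ m', 0 < m' → m' < m → elev δ w p (p + m') ≠ 0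

/-- `C` is the excursion of the up step of `w` at position `p`: the smallest factor
of `w` starting at `p` that is itself a Dyck word. -/
def IsExcursionAt (w : List Bool) (p : ℕ) (C : List Bool) : Prop :=
  w.getD p false = true ∧
  ∃ m, 0 < m ∧ p + m ≤ w.length ∧ C = (w.drop p).take m ∧ IsDyckPath C ∧
    ∀ m', 0 < m' → m' < m → ¬ IsDyckPath ((w.drop p).take m')

/-- `ℓ_i(w; δ)`: the length of the δ-excursion of `u_i` in `w`. -/
noncomputable def excLen (δ : ℕ → ℤ) (w : List Bool) (i : ℕ) : ℕ :=
  sInf {m | 0 < m ∧ elev δ w (upPos w i) (upPos w i + m) = 0}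

/-- `Q` is the δ-rotation of `P` at some up step: `P = A d C B` with `d u_i` a valley
and `C` the δ-excursion of `u_i`, and `Q = A C d B`. -/
def DeltaRot (δ : ℕ → ℤ) (P Q : List Bool) : Prop :=
  ∃ A C B, P = A ++ false :: (C ++ B) ∧ Q = A ++ (C ++ false :: B) ∧
    IsDeltaExcAt δ P (A.length + 1) C

/-- The alt-Tamari order `Tam^δ`: reflexive transitive closure of δ-rotations. -/
def altLE (δ : ℕ → ℤ) : List Bool → List Bool → Prop :=
  Relation.ReflTransGen (DeltaRot δ)

/-- The Tamari order: the alt-Tamari order for `δ ≡ 1` (the δ-excursion of any up step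
is then its excursion). -/
def tamLE : List Bool → List Bool → Prop := altLE fun _ => 1

/-- The height (number of `u`'s minus number of `d`'s) of the length-`j` prefix of `w`. -/
def prefHeight (w : List Bool) (j : ℕ) : ℤ :=
  ((w.take j).count true : ℤ) - ((w.take j).count false : ℤ)

/-- The Dyck (inclusion) order: every prefix height of `P` is at most that of `Q`. -/
def dyckLE (P Q : List Bool) : Prop := ∀ j, prefHeight P j ≤ prefHeight Q j

/-- Strict version of a relation `le`. -/
def ltOf (le : List Bool → List Bool → Prop) (P Q : List Bool) : Prop :=
  le P Q ∧ ¬ le Q P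

/-- There is a strict chain `P = c 0 < c 1 < ⋯ < c k = Q` inside `S`. -/
def HasChainIn (S : Set (List Bool)) (le : List Bool → List Bool → Prop)
    (P Q : List Bool) (k : ℕ) : Prop :=
  ∃ c : ℕ → List Bool, c 0 = P ∧ c k = Q ∧ (∀ i ≤ k, c i ∈ S) ∧
    ∀ i < k, ltOf le (c i) (c (i + 1))

/-- The interval `[P,Q]` of the poset `(S, le)` has height `k`: `k` is the maximal
length of a chain from `P` to `Q`. -/
def IntervalHeight (S : Set (List Bool)) (le : List Bool → List Bool → Prop)
    (P Q : List Bool) (k : ℕ) : Prop :=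
  HasChainIn S le P Q k ∧ ∀ m, HasChainIn S le P Q m → m ≤ k

/-- The interval `[P,Q]` of the poset `(S, le)` is linear: it is totally ordered. -/
def LinearInterval (S : Set (List Bool)) (le : List Bool → List Bool → Prop)
    (P Q : List Bool) : Prop :=
  P ∈ S ∧ Q ∈ S ∧ le P Q ∧
  ∀ R R', R ∈ S → R' ∈ S → le P R → le R Q → le P R' → le R' Q → le R R' ∨ le R' R

/-- `Q` covers `P` in the poset `(S, le)`. -/
def CovIn (S : Set (List Bool)) (le : List Bool → List Bool → Prop)
    (P Q : List Bool) : Prop :=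
  P ∈ S ∧ Q ∈ S ∧ ltOf le P Q ∧ ∀ R ∈ S, ¬ (ltOf le P R ∧ ltOf le R Q)

/-- The number of valleys (factors `du`) of `w`. -/
def valleys (w : List Bool) : ℕ :=
  ((List.range w.length).filter fun q => !w.getD q true && w.getD (q + 1) false).length

/-- The δ-elevation of a word whose letters are preceded by `s` up steps. -/
def wordElev (δ : ℕ → ℤ) : ℕ → List Bool → ℤ
  | _, [] => 0
  | s, true :: w => δ (s + 1) + wordElev δ (s + 1) w
  | s, false :: w => -1 + wordElev δ s w

/-- `C` is a δ-excursion when it is preceded by `s` up steps. -/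
def IsExc (δ : ℕ → ℤ) (s : ℕ) (C : List Bool) : Prop :=
  (∃ C', C = true :: C') ∧ wordElev δ s C = 0 ∧
    ∀ U V, C = U ++ V → U ≠ [] → V ≠ [] → 0 < wordElev δ s U

/-- Each word of the list is a δ-excursion when the words are read one after the other,
starting after `s` up steps. -/
def IsExcList (δ : ℕ → ℤ) : ℕ → List (List Bool) → Prop
  | _, [] => True
  | s, C :: Cs => IsExc δ s C ∧ IsExcList δ (s + C.count true) Cs

/-- The number of pairs formed by a down step and a later up step. -/
def downUpPairs : List Bool → ℕ
  | [] => 0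
  | true :: w => downUpPairs w
  | false :: w => w.count true + downUpPairs w

theorem wordElev_append (δ : ℕ → ℤ) (s : ℕ) (u v : List Bool) :
    wordElev δ s (u ++ v) = wordElev δ s u + wordElev δ (s + u.count true) v := by
  induction u generalizing s with
  | nil => simp [wordElev]
  | cons x u ih =>
    cases x
    · simp [wordElev, ih]; ring
    · simp [wordElev, ih, add_assoc, add_comm, add_left_comm]

theorem elev_append (δ : ℕ → ℤ) (A W : List Bool) (m : ℕ) (hm : m ≤ W.length) :
    elev δ (A ++ W) A.length (A.length + m) = wordElev δ (A.count true) (W.take m) := by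
  induction W generalizing A m with
  | nil => obtain rfl : m = 0 := by simpa using hm
           simp [elev, wordElev]
  | cons x W ih =>
    cases m with
    | zero => simp [elev, wordElev]
    | succ m =>
      have h := ih (A ++ [x]) m (by simpa using hm)
      have hs : elev δ (A ++ x :: W) A.length (A.length + (m + 1)) =
          stepVal δ (A ++ x :: W) A.length +
            elev δ (A ++ x :: W) (A.length + 1) (A.length + 1 + m) := by
        unfold elev
        rw [Finset.sum_eq_sum_Ico_succ_bot (by omega)]
        congr 3
        omega
      simp only [List.append_assoc, List.singleton_append, List.length_append,
        List.length_singleton] at h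
      rw [hs, h]
      have ht : (A ++ x :: W).take (A.length + 1) = A ++ [x] := by
        simp [List.take_append]
      cases x <;> simp [stepVal, wordElev, ht, List.count_append]

theorem IsExc.ne_nil {δ : ℕ → ℤ} {s : ℕ} {C : List Bool} (h : IsExc δ s C) : C ≠ [] := by
  obtain ⟨⟨C', rfl⟩, -⟩ := h
  simp

theorem isExc_of_ne_zero {δ : ℕ → ℤ} (hδ : IsIncFun δ) {s : ℕ} {C : List Bool}
    (hC : ∃ C', C = true :: C') (h0 : wordElev δ s C = 0)
    (h : ∀ U V, C = U ++ V → U ≠ [] → V ≠ [] → wordElev δ s U ≠ 0) : IsExc δ s C := by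
  refine ⟨hC, h0, fun U => ?_⟩
  induction U using List.reverseRecOn with
  | nil => simp
  | append_singleton U x ih =>
    intro V hV hU hV'
    have hne := h _ V hV hU hV'
    rw [wordElev_append] at hne ⊢
    have hd := hδ (s + U.count true + 1)
    by_cases hU' : U = []
    · subst hU'
      obtain ⟨C', rfl⟩ := hC
      obtain rfl : x = true := by simp at hV; exact hV.1
      simp [wordElev] at hne hd ⊢
      omega
    · have := ih ([x] ++ V) (by simpa using hV) hU' (by simp)
      cases x <;> simp [wordElev] at hne ⊢ <;> omega

theorem isDeltaExcAt_append_iff {δ : ℕ → ℤ} (hδ : IsIncFun δ) (A C B : List Bool) :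
    IsDeltaExcAt δ (A ++ (C ++ B)) A.length C ↔ IsExc δ (A.count true) C := by
  constructor
  · rintro ⟨h1, m, hm, hl, hC, h0, hmin⟩
    have hml : m ≤ (C ++ B).length := by
      simp only [List.length_append] at hl ⊢; omega
    have hCl : C.length = m := by
      rw [hC]; simp at hml ⊢; omega
    rw [elev_append _ _ _ _ hml, ← hCl, List.take_left] at h0
    refine isExc_of_ne_zero hδ ?_ h0 ?_
    · cases C with
      | nil => simp at hCl; omega
      | cons x C =>
        refine ⟨C, ?_⟩
        simp at h1
        simp [h1]
    · rintro U V rfl hU hV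
      have := hmin U.length (List.length_pos_iff.2 hU)
        (by have := List.length_pos_iff.2 hV; simp at hCl; omega)
      rwa [elev_append _ _ _ _ (by simp), List.append_assoc, List.take_left] at this
  · rintro ⟨⟨C', hC'⟩, h0, hpos⟩
    refine ⟨by simp [hC'], C.length, by simp [hC'], by simp, by simp, ?_, ?_⟩
    · rw [elev_append _ _ _ _ (by simp), List.take_left, h0]
    · intro m hm hml
      rw [elev_append _ _ _ _ (by simp; omega), List.take_append_of_le_length hml.le]
      refine (hpos (C.take m) (C.drop m) (by simp) ?_ ?_).ne'
      · rw [← List.length_pos_iff, List.length_take]; omega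
      · rw [← List.length_pos_iff, List.length_drop]; omega

theorem deltaRot_iff {δ : ℕ → ℤ} (hδ : IsIncFun δ) {P Q : List Bool} :
    DeltaRot δ P Q ↔ ∃ A C B, P = A ++ false :: (C ++ B) ∧ Q = A ++ (C ++ false :: B) ∧
      IsExc δ (A.count true) C := by
  unfold DeltaRot
  refine exists_congr fun A => exists_congr fun C => exists_congr fun B =>
    and_congr_right fun hP => and_congr_right fun _ => ?_
  have h := isDeltaExcAt_append_iff hδ (A ++ [false]) C B
  rw [hP]
  simpa [List.count_append] using h

theorem IsExc.wordElev_prefix_nonneg {δ : ℕ → ℤ} {s : ℕ} {C U V : List Bool}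
    (h : IsExc δ s C) (hC : C = U ++ V) : 0 ≤ wordElev δ s U := by
  by_cases hU : U = []
  · simp [hU, wordElev]
  by_cases hV : V = []
  · have := h.2.1
    simp [hC, hV] at this
    omega
  exact (h.2.2 U V hC hU hV).le

theorem IsExc.eq_of_append_eq {δ : ℕ → ℤ} {s : ℕ} {C C' B B' : List Bool}
    (h : IsExc δ s C) (h' : IsExc δ s C') (he : C ++ B = C' ++ B') : C = C' := by
  rcases List.append_eq_append_iff.1 he with ⟨E, rfl, -⟩ | ⟨E, rfl, -⟩
  · by_contra hne
    have := h'.2.2 C E rfl h.ne_nil (by rintro rfl; simp at hne)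
    have := h.2.1
    omega
  · by_contra hne
    have := h.2.2 C' E rfl h'.ne_nil (by rintro rfl; simp at hne)
    have := h'.2.1
    omega

theorem exists_cons_true_of_append {D E F : List Bool} (h : ∃ C', D ++ E = true :: C')
    (hD : D ≠ []) : ∃ C', D ++ F = true :: C' := by
  obtain ⟨C', h⟩ := h
  cases D with
  | nil => exact absurd rfl hD
  | cons x D => simp at h; exact ⟨D ++ F, by simp [h.1]⟩

theorem wordElev_swap (δ : ℕ → ℤ) (s : ℕ) (D C F : List Bool) :
    wordElev δ s (D ++ (C ++ false :: F)) = wordElev δ s (D ++ false :: (C ++ F)) := by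
  simp only [wordElev_append, wordElev]
  ring

theorem IsExc.swap_right {δ : ℕ → ℤ} {s : ℕ} {D C F : List Bool} (hD : D ≠ [])
    (h : IsExc δ s (D ++ false :: (C ++ F))) (hC : IsExc δ (s + D.count true) C) :
    IsExc δ s (D ++ (C ++ false :: F)) := by
  refine ⟨exists_cons_true_of_append h.1 hD, by rw [wordElev_swap, h.2.1], ?_⟩
  intro U V hUV hU hV
  have hDpos := h.2.2 D _ rfl hD (by simp)
  rcases List.append_eq_append_iff.1 hUV with ⟨U', rfl, h1⟩ | ⟨E, rfl, -⟩
  · rcases List.append_eq_append_iff.1 h1 with ⟨W, rfl, h2⟩ | ⟨E, rfl, -⟩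
    · rcases List.cons_eq_append_iff.1 h2 with ⟨rfl, -⟩ | ⟨X, rfl, rfl⟩
      · rw [List.append_nil, wordElev_append, hC.2.1]
        omega
      · rw [wordElev_swap]
        exact h.2.2 _ V (by simp) (by simp) hV
    · have := hC.wordElev_prefix_nonneg rfl
      rw [wordElev_append]
      omega
  · exact h.2.2 U (E ++ false :: (C ++ F)) (by simp) hU (by simp)

theorem IsExc.swap_left {δ : ℕ → ℤ} {s : ℕ} {D C F : List Bool} (hD : D ≠ []) (hF : F ≠ [])
    (h : IsExc δ s (D ++ (C ++ false :: F))) (hC : IsExc δ (s + D.count true) C) :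
    IsExc δ s (D ++ false :: (C ++ F)) := by
  refine ⟨exists_cons_true_of_append h.1 hD, by rw [← wordElev_swap, h.2.1], ?_⟩
  intro U V hUV hU hV
  rcases List.append_eq_append_iff.1 hUV with ⟨U', rfl, h1⟩ | ⟨E, rfl, -⟩
  · rcases List.cons_eq_append_iff.1 h1 with ⟨rfl, -⟩ | ⟨X, rfl, h2⟩
    · rw [List.append_nil]
      exact h.2.2 D _ rfl hD (by simp)
    · rcases List.append_eq_append_iff.1 h2 with ⟨W, rfl, rfl⟩ | ⟨E, rfl, -⟩
      · rw [← wordElev_swap]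
        exact h.2.2 _ V (by simp) (by simp) hV
      · have h3 := hC.wordElev_prefix_nonneg rfl
        have h4 := h.2.2 (D ++ ((X ++ E) ++ [false])) F (by simp) (by simp) hF
        have h5 := hC.2.1
        simp only [wordElev_append, wordElev] at h3 h4 h5 ⊢
        omega
  · exact h.2.2 U (E ++ (C ++ false :: F)) (by simp) hU (by simp [hC.ne_nil])

theorem isExc_append_false_iff {δ : ℕ → ℤ} {s : ℕ} {D C : List Bool} (hD : D ≠ [])
    (hC : IsExc δ (s + D.count true) C) :
    IsExc δ s (D ++ (C ++ [false])) ↔ IsExc δ s (D ++ [false]) := by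
  have he : wordElev δ s (D ++ (C ++ [false])) = wordElev δ s (D ++ [false]) := by
    have := hC.2.1
    simp only [wordElev_append, wordElev]
    omega
  constructor
  · intro h
    refine ⟨exists_cons_true_of_append h.1 hD, by rw [← he, h.2.1], ?_⟩
    intro U V hUV hU hV
    rcases List.append_eq_append_iff.1 hUV with ⟨U', rfl, h1⟩ | ⟨E, rfl, -⟩
    · rcases List.cons_eq_append_iff.1 h1 with ⟨rfl, -⟩ | ⟨X, rfl, h2⟩
      · rw [List.append_nil]
        exact h.2.2 D _ rfl hD (by simp)
      · simp at h2
        exact absurd h2.2 hV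
    · exact h.2.2 U (E ++ (C ++ [false])) (by simp) hU (by simp)
  · intro h
    refine ⟨exists_cons_true_of_append h.1 hD, by rw [he, h.2.1], ?_⟩
    intro U V hUV hU hV
    have hDpos := h.2.2 D _ rfl hD (by simp)
    rcases List.append_eq_append_iff.1 hUV with ⟨U', rfl, h1⟩ | ⟨E, rfl, -⟩
    · rcases List.append_eq_append_iff.1 h1 with ⟨W, rfl, h2⟩ | ⟨E, rfl, -⟩
      · rcases List.cons_eq_append_iff.1 h2 with ⟨rfl, -⟩ | ⟨X, rfl, h3⟩
        · rw [List.append_nil, wordElev_append, hC.2.1]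
          omega
        · simp at h3
          exact absurd h3.2 hV
      · have := hC.wordElev_prefix_nonneg rfl
        rw [wordElev_append]
        omega
    · exact h.2.2 U (E ++ [false]) (by simp) hU (by simp)

theorem downUpPairs_append (u v : List Bool) :
    downUpPairs (u ++ v) = downUpPairs u + downUpPairs v + u.count false * v.count true := by
  induction u with
  | nil => simp [downUpPairs]
  | cons x u ih =>
    cases x
    · simp [downUpPairs, ih]; ring
    · simp [downUpPairs, ih]

theorem DeltaRot.downUpPairs_lt {δ : ℕ → ℤ} (hδ : IsIncFun δ) {P Q : List Bool}
    (h : DeltaRot δ P Q) : downUpPairs Q < downUpPairs P := by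
  obtain ⟨A, C, B, rfl, rfl, ⟨C', rfl⟩, -⟩ := (deltaRot_iff hδ).1 h
  simp [downUpPairs, downUpPairs_append]
  ring_nf
  omega

theorem altLE.eq_or_downUpPairs_lt {δ : ℕ → ℤ} (hδ : IsIncFun δ) {P Q : List Bool}
    (h : altLE δ P Q) : P = Q ∨ downUpPairs Q < downUpPairs P := by
  induction h with
  | refl => exact Or.inl rfl
  | tail _ h ih =>
    have := h.downUpPairs_lt hδ
    rcases ih with rfl | ih
    · exact Or.inr this
    · exact Or.inr (this.trans ih)

theorem altLE.ltOf_of_ne {δ : ℕ → ℤ} (hδ : IsIncFun δ) {P Q : List Bool}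
    (h : altLE δ P Q) (hne : P ≠ Q) : ltOf (altLE δ) P Q := by
  refine ⟨h, fun h' => ?_⟩
  have h1 := (h.eq_or_downUpPairs_lt hδ).resolve_left hne
  have h2 := (h'.eq_or_downUpPairs_lt hδ).resolve_left hne.symm
  omega

theorem DeltaRot.mem_dyckSet {δ : ℕ → ℤ} {n : ℕ} {P Q : List Bool}
    (h : DeltaRot δ P Q) (hP : P ∈ DyckSet n) : Q ∈ DyckSet n := by
  obtain ⟨A, C, B, rfl, rfl, -⟩ := h
  obtain ⟨h1, h2, h3⟩ := hP
  refine ⟨by simpa [List.count_cons] using h1, ?_, ?_⟩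
  · simp at h2 ⊢
    omega
  · rintro p ⟨V, hV⟩
    rcases List.append_eq_append_iff.1 hV with ⟨E, rfl, -⟩ | ⟨U, rfl, hU⟩
    · exact h3 p ⟨E ++ false :: (C ++ B), by simp⟩
    · rcases List.append_eq_append_iff.1 hU.symm with ⟨W, rfl, -⟩ | ⟨E, rfl, hE⟩
      · have := h3 (A ++ false :: U) ⟨W ++ B, by simp⟩
        simp at this ⊢
        omega
      · rcases List.cons_eq_append_iff.1 hE with ⟨rfl, -⟩ | ⟨X, rfl, rfl⟩
        · have := h3 (A ++ false :: C) ⟨B, by simp⟩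
          simp at this ⊢
          omega
        · have := h3 (A ++ false :: (C ++ X)) ⟨V, by simp⟩
          simp at this ⊢
          omega

theorem altLE.mem_dyckSet {δ : ℕ → ℤ} {n : ℕ} {P Q : List Bool}
    (h : altLE δ P Q) (hP : P ∈ DyckSet n) : Q ∈ DyckSet n := by
  induction h with
  | refl => exact hP
  | tail _ h ih => exact h.mem_dyckSet ih

/-- Two successive rotations `P → P₁ → P₂` such that `P₁` is the only rotation of `P` strictly
below `P₂` either move two down steps over one excursion or one down step over two excursions. -/
theorem consecutive_rotations {δ : ℕ → ℤ} (hδ : IsIncFun δ) {A C B A' C' B' : List Bool}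
    (hC : IsExc δ (A.count true) C) (hC' : IsExc δ (A'.count true) C')
    (heq : A ++ (C ++ false :: B) = A' ++ false :: (C' ++ B'))
    (huniq : ∀ R, DeltaRot δ (A ++ false :: (C ++ B)) R →
      Relation.TransGen (DeltaRot δ) R (A' ++ (C' ++ false :: B')) →
      R = A ++ (C ++ false :: B)) :
    (A = A' ++ [false] ∧ C = C' ∧ B' = false :: B) ∨ (A' = A ++ C ∧ B = C' ++ B') := by
  have hrot : ∀ {P Q : List Bool} (X Y Z : List Bool), P = X ++ false :: (Y ++ Z) →
      Q = X ++ (Y ++ false :: Z) → IsExc δ (X.count true) Y → DeltaRot δ P Q :=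
    fun X Y Z hP hQ hY => (deltaRot_iff hδ).2 ⟨X, Y, Z, hP, hQ, hY⟩
  obtain ⟨c, hc⟩ := hC.1
  obtain ⟨c', hc'⟩ := hC'.1
  rcases List.append_eq_append_iff.1 heq with ⟨D, rfl, h1⟩ | ⟨D, rfl, h1⟩
  · right
    rcases List.append_eq_append_iff.1 h1 with ⟨D', rfl, h2⟩ | ⟨E, rfl, h2⟩
    · rcases List.cons_eq_append_iff.1 h2 with ⟨rfl, h3⟩ | ⟨X, rfl, rfl⟩
      · simp at h3
        simp [h3]
      · exfalso
        have := huniq (A ++ false :: (C ++ (X ++ (C' ++ false :: B'))))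
          (hrot (A ++ false :: (C ++ X)) C' B' (by simp) (by simp)
            (by simpa [List.count_append, add_assoc] using hC'))
          (.single (hrot A C (X ++ (C' ++ false :: B')) (by simp) (by simp) hC))
        simp [hc] at this
    · rcases List.cons_eq_append_iff.1 h2 with ⟨rfl, h3⟩ | ⟨X, rfl, h3⟩
      · simp at h3
        simp [h3]
      · exfalso
        have hD : D ≠ [] := by rintro rfl; simp at hc
        rcases List.append_eq_append_iff.1 h3.symm with ⟨F, rfl, h4⟩ | ⟨F, rfl, h4⟩
        · have hX : X ≠ [] := by
            rintro rfl
            rw [List.nil_append] at hc'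
            simp [hc'] at h4
          have e1 := hC'.wordElev_prefix_nonneg rfl
          have e2 := hC.2.2 (D ++ [false]) X (by simp) (by simp) hX
          have e3 := hC.2.1
          rw [show D ++ false :: X = (D ++ [false]) ++ X by simp, wordElev_append] at e3
          simp [List.count_append] at e1 e3
          omega
        · have := huniq (A ++ false :: ((D ++ (C' ++ false :: F)) ++ B))
            (hrot (A ++ false :: D) C' (F ++ B) (by simp) (by simp)
              (by simpa [List.count_append] using hC'))
            (.single (hrot A (D ++ (C' ++ false :: F)) B (by simp) (by simp [h4])
              (hC.swap_right hD (by simpa [List.count_append] using hC'))))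
          simp [hc] at this
  · rcases List.cons_eq_append_iff.1 h1 with ⟨rfl, h2⟩ | ⟨D, rfl, h2⟩
    · simp [hc] at h2
    · have hDC : IsExc δ (A'.count true + D.count true) C := by
        simpa [List.count_append] using hC
      by_cases hD : D = []
      · subst hD
        left
        obtain rfl : C' = C := hC'.eq_of_append_eq (by simpa using hC) h2
        simpa using h2
      · exfalso
        have hsplit : (∃ E, D = C' ++ E ∧ B' = E ++ (C ++ false :: B)) ∨
            ∃ E, E ≠ [] ∧ C' = D ++ E ∧ C ++ false :: B = E ++ B' := by
          rcases List.append_eq_append_iff.1 h2 with hl | ⟨E, hE, h3⟩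
          · exact Or.inl hl
          · rcases eq_or_ne E [] with rfl | hne
            · exact Or.inl ⟨[], by simp [hE], by simpa using h3.symm⟩
            · exact Or.inr ⟨E, hne, hE, h3⟩
        rcases hsplit with ⟨E, rfl, rfl⟩ | ⟨E, hE, rfl, h3⟩
        · have := huniq (A' ++ (C' ++ false :: (E ++ false :: (C ++ B))))
            (hrot A' C' (E ++ false :: (C ++ B)) (by simp) (by simp) hC')
            (.single (hrot (A' ++ (C' ++ false :: E)) C B (by simp) (by simp)
              (by simpa [List.count_append] using hC)))
          simp [hc'] at this
        · have hDc : ∃ D', D = true :: D' := by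
            simpa using exists_cons_true_of_append (F := []) hC'.1 hD
          obtain ⟨D', hD'⟩ := hDc
          rcases List.append_eq_append_iff.1 h3 with ⟨F, rfl, h4⟩ | ⟨F, rfl, h4⟩
          · rcases List.cons_eq_append_iff.1 h4 with ⟨rfl, -⟩ | ⟨G, rfl, rfl⟩
            · have e1 := hC'.2.2 D (C ++ []) rfl hD (by simp [hc])
              have e2 := hC'.2.1
              have e3 := hDC.2.1
              rw [wordElev_append, List.append_nil] at e2
              omega
            · by_cases hG : G = []
              · subst hG
                have := huniq (A' ++ (D ++ false :: false :: (C ++ B')))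
                  (hrot A' (D ++ [false]) (C ++ B') (by simp) (by simp)
                    ((isExc_append_false_iff hD hDC).1 hC'))
                  (.tail (.single (hrot (A' ++ (D ++ [false])) C B' (by simp) rfl
                    (by simpa [List.count_append] using hC)))
                    (hrot (A' ++ D) C (false :: B') (by simp) (by simp)
                      (by simpa [List.count_append] using hC)))
                simp [hD'] at this
              · have := huniq (A' ++ ((D ++ false :: (C ++ G)) ++ false :: B'))
                  (hrot A' (D ++ false :: (C ++ G)) B' (by simp) rfl
                    (hC'.swap_left hD hG hDC))
                  (.single (hrot (A' ++ D) C (G ++ false :: B') (by simp) (by simp)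
                    (by simpa [List.count_append] using hC)))
                simp [hD'] at this
          · have e1 := hC'.2.1
            have e2 := hDC.wordElev_prefix_nonneg rfl
            rw [wordElev_append] at e1
            have e3 := hC'.2.2 D E rfl hD hE
            omega

/-- `c 0 → c 1 → ⋯ → c k` is a chain of rotations which contains every element
of the interval `[c 0, c k]`. -/
def IsSaturated (δ : ℕ → ℤ) (k : ℕ) (c : ℕ → List Bool) : Prop :=
  (∀ i < k, DeltaRot δ (c i) (c (i + 1))) ∧
    ∀ R, altLE δ (c 0) R → altLE δ R (c k) → ∃ i ≤ k, R = c i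

theorem IsSaturated.downUpPairs_anti {δ : ℕ → ℤ} (hδ : IsIncFun δ) {k : ℕ}
    {c : ℕ → List Bool} (h : IsSaturated δ k c) {i j : ℕ} (hij : i < j) (hj : j ≤ k) :
    downUpPairs (c j) < downUpPairs (c i) := by
  induction j, hij using Nat.le_induction with
  | base => exact (h.1 i (by omega)).downUpPairs_lt hδ
  | succ j hij ih =>
    have := ih (by omega)
    have := (h.1 j (by omega)).downUpPairs_lt hδ
    omega

theorem IsSaturated.altLE {δ : ℕ → ℤ} {k : ℕ}
    {c : ℕ → List Bool} (h : IsSaturated δ k c) {i j : ℕ} (hij : i ≤ j) (hj : j ≤ k) :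
    altLE δ (c i) (c j) := by
  induction j, hij using Nat.le_induction with
  | base => exact .refl
  | succ j hij ih => exact (ih (by omega)).tail (h.1 j (by omega))

theorem IsSaturated.shift {δ : ℕ → ℤ} (hδ : IsIncFun δ) {k : ℕ} {c : ℕ → List Bool}
    (h : IsSaturated δ (k + 1) c) : IsSaturated δ k fun i => c (i + 1) := by
  refine ⟨fun i hi => h.1 (i + 1) (by omega), fun R h1 h2 => ?_⟩
  obtain ⟨i, hi, rfl⟩ := h.2 R (h1.head (h.1 0 (by omega))) h2
  cases i with
  | zero =>
    have h3 := h.downUpPairs_anti hδ (i := 0) (j := 1) (by omega) (by omega)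
    rcases h1.eq_or_downUpPairs_lt hδ with h4 | h4
    · simp only [zero_add] at h4
      rw [h4] at h3
      omega
    · simp only [zero_add] at h4
      omega
  | succ i => exact ⟨i, by omega, rfl⟩

/-- A rotation of `c 0` strictly below `c j` is one of `c 1, …, c (j - 1)`. -/
theorem IsSaturated.exists_between {δ : ℕ → ℤ} (hδ : IsIncFun δ) {k : ℕ} {c : ℕ → List Bool}
    (h : IsSaturated δ k c) {j : ℕ} (hj : j ≤ k) {R : List Bool} (h1 : DeltaRot δ (c 0) R)
    (h2 : Relation.TransGen (DeltaRot δ) R (c j)) : ∃ i, 0 < i ∧ i < j ∧ R = c i := by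
  obtain ⟨i, hi, rfl⟩ := h.2 R (.single h1) (h2.to_reflTransGen.trans (h.altLE hj le_rfl))
  refine ⟨i, ?_, ?_, rfl⟩
  · have := h1.downUpPairs_lt hδ
    rcases Nat.eq_zero_or_pos i with rfl | hi
    · omega
    · exact hi
  · obtain ⟨S, h3, h4⟩ := Relation.TransGen.head'_iff.1 h2
    have h5 := h3.downUpPairs_lt hδ
    have h6 : downUpPairs (c j) ≤ downUpPairs S := by
      rcases altLE.eq_or_downUpPairs_lt hδ h4 with h | h
      · rw [h]
      · exact h.le
    by_contra hij
    rcases (not_lt.1 hij).eq_or_lt with rfl | hij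
    · omega
    · have := h.downUpPairs_anti hδ hij hi
      omega

/-- The chain moves `k` down steps one after the other over a common excursion. -/
def IsLeftChain (δ : ℕ → ℤ) (k : ℕ) (c : ℕ → List Bool) : Prop :=
  ∃ A C B, IsExc δ (A.count true) C ∧ ∀ i ≤ k, c i =
    A ++ (List.replicate (k - i) false ++ (C ++ (List.replicate i false ++ B)))

/-- The chain moves one down step over `k` consecutive excursions. -/
def IsRightChain (δ : ℕ → ℤ) (k : ℕ) (c : ℕ → List Bool) : Prop :=
  ∃ A B Cs, Cs.length = k ∧ IsExcList δ (A.count true) Cs ∧ ∀ i ≤ k, c i =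
    A ++ ((Cs.take i).flatten ++ false :: ((Cs.drop i).flatten ++ B))

theorem IsSaturated.consecutive_rotations {δ : ℕ → ℤ} (hδ : IsIncFun δ) {k : ℕ}
    {c : ℕ → List Bool} (h : IsSaturated δ k c) (hk : 2 ≤ k) {A' C' B' : List Bool}
    (h1 : c 1 = A' ++ false :: (C' ++ B')) (h2 : c 2 = A' ++ (C' ++ false :: B'))
    (hC' : IsExc δ (A'.count true) C') :
    (∃ B, B' = false :: B ∧ c 0 = A' ++ false :: false :: (C' ++ B)) ∨
      ∃ A C, IsExc δ (A.count true) C ∧ A' = A ++ C ∧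
        c 0 = A ++ false :: (C ++ (C' ++ B')) := by
  obtain ⟨A, C, B, hP, hP1, hC⟩ := (deltaRot_iff hδ).1 (h.1 0 (by omega))
  simp only [zero_add] at hP1
  have huniq : ∀ R, DeltaRot δ (A ++ false :: (C ++ B)) R →
      Relation.TransGen (DeltaRot δ) R (A' ++ (C' ++ false :: B')) →
      R = A ++ (C ++ false :: B) := by
    intro R hR hR'
    rw [← hP] at hR
    rw [← h2] at hR'
    obtain ⟨i, hi, hi2, rfl⟩ := h.exists_between hδ hk hR hR'
    obtain rfl : i = 1 := by omega
    exact hP1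
  rcases _root_.consecutive_rotations hδ hC hC' (hP1.symm.trans h1) huniq with
    ⟨rfl, rfl, rfl⟩ | ⟨rfl, rfl⟩
  · exact Or.inl ⟨B, rfl, by simp [hP]⟩
  · exact Or.inr ⟨A, C, hC, rfl, hP⟩

theorem IsSaturated.isLeftChain_or_isRightChain {δ : ℕ → ℤ} (hδ : IsIncFun δ) {k : ℕ}
    (hk : 2 ≤ k) {c : ℕ → List Bool} (h : IsSaturated δ k c) :
    IsLeftChain δ k c ∨ IsRightChain δ k c := by
  induction k, hk using Nat.le_induction generalizing c with
  | base =>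
    obtain ⟨A', C', B', h1, h2, hC'⟩ := (deltaRot_iff hδ).1 (h.1 1 (by omega))
    rcases h.consecutive_rotations hδ le_rfl h1 h2 hC' with ⟨B, rfl, h0⟩ | ⟨A, C, hC, rfl, h0⟩
    · refine Or.inl ⟨A', C', B, hC', fun i hi => ?_⟩
      interval_cases i <;> simp [h0, h1, h2, List.replicate_succ]
    · refine Or.inr ⟨A, B', [C, C'], rfl,
        ⟨hC, by simpa [List.count_append] using hC', trivial⟩, fun i hi => ?_⟩
      interval_cases i <;> simp [h0, h1, h2]
  | succ k hk ih =>
    rcases ih (h.shift hδ) with ⟨A', C', B', hC', hc⟩ | ⟨A', B', Cs, hl, hCs, hc⟩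
    · obtain ⟨k, rfl⟩ := Nat.exists_eq_add_of_le' hk
      have h1 : c 1 = A' ++ (List.replicate (k + 2) false ++ (C' ++ B')) := hc 0 (by omega)
      have h2 : c 2 = A' ++ (List.replicate (k + 1) false ++ (C' ++ false :: B')) :=
        hc 1 (by omega)
      have h3 : c 3 = A' ++ (List.replicate k false ++ (C' ++ false :: false :: B')) :=
        hc 2 (by omega)
      have hA : (A' ++ List.replicate (k + 1) false).count true = A'.count true := by
        simp [List.count_replicate]
      rcases h.consecutive_rotations hδ (by omega)
          (A' := A' ++ List.replicate (k + 1) false) (C' := C') (B' := B')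
          (by simp [h1, List.replicate_succ']) (by simp [h2]) (by rwa [hA]) with
        ⟨B, rfl, h0⟩ | ⟨A, C, hC, hAC, h0⟩
      · refine Or.inl ⟨A', C', B, hC', fun i hi => ?_⟩
        cases i with
        | zero => simp [h0, List.replicate_succ']
        | succ i =>
          refine (hc i (by omega)).trans ?_
          simp [List.replicate_succ']
      · exfalso
        obtain ⟨a, ha⟩ := hC.1
        obtain ⟨D, rfl⟩ : ∃ D, C = D ++ [false] := by
          have h4 : (A' ++ List.replicate (k + 1) false).getLast? = some false := by
            simp [List.replicate_succ']
          rw [hAC, List.getLast?_append_of_ne_nil _ hC.ne_nil] at h4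
          obtain ⟨D, hD⟩ := List.getLast?_eq_some_iff.1 h4
          exact ⟨D, hD⟩
        have hAD : A' ++ List.replicate k false = A ++ D := by
          have : (A' ++ List.replicate k false) ++ [false] = (A ++ D) ++ [false] := by
            simpa [List.replicate_succ'] using hAC
          exact List.append_cancel_right this
        have hD : D ≠ [] := by rintro rfl; simp at ha
        have hCD : IsExc δ (A.count true + D.count true) C' := by
          have := congrArg (List.count true) hAD
          simp [List.count_append, List.count_replicate] at this
          rwa [← this]
        have h2' : c 2 = A ++ (D ++ false :: (C' ++ false :: B')) := by
          rw [h2, ← List.append_assoc]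
          simp [hAC]
        have h3' : c 3 = A ++ (D ++ (C' ++ false :: false :: B')) := by
          rw [h3, ← List.append_assoc]
          simp [hAD]
        have h1' : c 1 = A ++ (D ++ false :: false :: (C' ++ B')) := by
          have hsplit : c 1 = (A' ++ List.replicate (k + 1) false) ++ false :: (C' ++ B') := by
            simp [h1, List.replicate_succ']
          simp [hsplit, hAC]
        obtain ⟨i, hi, hi3, hR⟩ := h.exists_between hδ (j := 3) (by omega)
          (R := A ++ false :: (D ++ (C' ++ false :: B')))
          ((deltaRot_iff hδ).2 ⟨A ++ false :: D, C', B', by simp [h0], by simp,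
            by simpa [List.count_append] using hCD⟩)
          (.single ((deltaRot_iff hδ).2 ⟨A, D ++ (C' ++ [false]), B', by simp,
            by simp [h3'], (isExc_append_false_iff hD hCD).2 hC⟩))
        obtain ⟨d, hd⟩ : ∃ d, D = true :: d := by
          simpa using exists_cons_true_of_append (F := []) hC.1 hD
        obtain rfl | rfl : i = 1 ∨ i = 2 := by omega
        · simp [h1', hd] at hR
        · simp [h2', hd] at hR
    · obtain ⟨C₁, C₂, Cs, rfl⟩ : ∃ C₁ C₂ Cs', Cs = C₁ :: C₂ :: Cs' := by
        match Cs, hl with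
        | [], hl => simp at hl; omega
        | [_], hl => simp at hl; omega
        | C₁ :: C₂ :: Cs', _ => exact ⟨C₁, C₂, Cs', rfl⟩
      obtain ⟨a, ha⟩ := hCs.2.1.1
      have h1 := hc 0 (by omega)
      have h2 := hc 1 (by omega)
      rcases h.consecutive_rotations hδ (by omega) (A' := A') (C' := C₁)
          (B' := C₂ ++ (Cs.flatten ++ B')) (by simpa using h1) (by simpa using h2) hCs.1 with
        ⟨B, hB, -⟩ | ⟨A, C, hC, rfl, h0⟩
      · simp [ha] at hB
      · refine Or.inr ⟨A, B', C :: C₁ :: C₂ :: Cs, by simpa using hl,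
          ⟨hC, by simpa [List.count_append] using hCs⟩, fun i hi => ?_⟩
        cases i with
        | zero => simp [h0]
        | succ i =>
          refine (hc i (by omega)).trans ?_
          simp


theorem HasChainIn.insert {S : Set (List Bool)} {le : List Bool → List Bool → Prop} {k i : ℕ}
    {c : ℕ → List Bool} (hmem : ∀ i ≤ k, c i ∈ S) (hlt : ∀ i < k, ltOf le (c i) (c (i + 1)))
    (hi : i < k) {R : List Bool} (hR : R ∈ S) (h1 : ltOf le (c i) R)
    (h2 : ltOf le R (c (i + 1))) : HasChainIn S le (c 0) (c k) (k + 1) := by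
  refine ⟨fun j => if j ≤ i then c j else if j = i + 1 then R else c (j - 1), by simp, ?_, ?_, ?_⟩
  · have e1 : ¬ k + 1 ≤ i := by omega
    have e2 : ¬ k + 1 = i + 1 := by omega
    simp only [if_neg e1, if_neg e2, Nat.add_sub_cancel]
  · intro j hj
    dsimp only
    split_ifs
    · exact hmem j (by omega)
    · exact hR
    · exact hmem (j - 1) (by omega)
  · intro j hj
    dsimp only
    rcases lt_trichotomy j i with hji | rfl | hji
    · rw [if_pos hji.le, if_pos (by omega)]
      exact hlt j (by omega)
    · rw [if_pos le_rfl, if_neg (by omega), if_pos rfl]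
      exact h1
    · rw [if_neg (by omega), if_neg (by omega : ¬ j + 1 ≤ i), if_neg (by omega : ¬ j + 1 = i + 1),
        Nat.add_sub_cancel]
      split_ifs with h
      · rw [h]
        exact h2
      · have := hlt (j - 1) (by omega)
        rwa [Nat.sub_add_cancel (by omega)] at this

theorem LinearInterval.exists_isSaturated {δ : ℕ → ℤ} (hδ : IsIncFun δ) {n k : ℕ}
    {P Q : List Bool} (hlin : LinearInterval (DyckSet n) (_root_.altLE δ) P Q)
    (hht : IntervalHeight (DyckSet n) (_root_.altLE δ) P Q k) :
    ∃ c, c 0 = P ∧ c k = Q ∧ IsSaturated δ k c := by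
  obtain ⟨⟨c, rfl, rfl, hmem, hlt⟩, hmax⟩ := hht
  obtain ⟨hP, -, -, htot⟩ := hlin
  have hins : ∀ i < k, ∀ R, _root_.altLE δ (c i) R → _root_.altLE δ R (c (i + 1)) →
      R = c i ∨ R = c (i + 1) := by
    intro i hi R h1 h2
    by_contra! hne
    have := hmax _ (HasChainIn.insert hmem hlt hi (h1.mem_dyckSet (hmem i hi.le))
      (h1.ltOf_of_ne hδ hne.1.symm) (h2.ltOf_of_ne hδ hne.2))
    omega
  have hle : ∀ i j, i ≤ j → j ≤ k → _root_.altLE δ (c i) (c j) := by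
    intro i j hij
    induction j, hij using Nat.le_induction with
    | base => exact fun _ => .refl
    | succ j _ ih => exact fun hj => (ih (by omega)).trans (hlt j (by omega)).1
  refine ⟨c, rfl, rfl, fun i hi => ?_, fun R h1 h2 => ?_⟩
  · rcases Relation.ReflTransGen.cases_head (hlt i hi).1 with h | ⟨M, h1, h2⟩
    · exact absurd (h ▸ .refl) (hlt i hi).2
    · rcases hins i hi M (.single h1) h2 with rfl | rfl
      · exact absurd (h1.downUpPairs_lt hδ) (lt_irrefl _)
      · exact h1
  · have hR := h1.mem_dyckSet hP
    have hstep : ∀ j ≤ k, _root_.altLE δ (c j) R ∨ ∃ i ≤ k, R = c i := by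
      intro j
      induction j with
      | zero => exact fun _ => Or.inl h1
      | succ j ih =>
        intro hj
        rcases ih (by omega) with h | h
        · rcases htot R (c (j + 1)) hR (hmem _ hj) h1 h2 (hle 0 _ (by omega) hj)
            (hle _ k hj le_rfl) with h3 | h3
          · rcases hins j (by omega) R h h3 with h4 | h4
            · exact Or.inr ⟨j, by omega, h4⟩
            · exact Or.inr ⟨j + 1, hj, h4⟩
          · exact Or.inl h3
        · exact Or.inr h
    rcases hstep k le_rfl with h | h
    · refine ⟨k, le_rfl, ?_⟩
      by_contra hne
      exact (h2.ltOf_of_ne hδ hne).2 h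
    · exact h

theorem IsExcList.isDeltaExcAt {δ : ℕ → ℤ} (hδ : IsIncFun δ) {A B : List Bool}
    {Cs : List (List Bool)} (h : IsExcList δ (A.count true) Cs) {j : ℕ} (hj : j < Cs.length) :
    IsDeltaExcAt δ (A ++ (Cs.flatten ++ B)) (A.length + ((Cs.take j).flatten).length)
      (Cs.getD j []) := by
  induction Cs generalizing A j with
  | nil => simp at hj
  | cons C Cs ih =>
    cases j with
    | zero =>
      have := (isDeltaExcAt_append_iff hδ A C (Cs.flatten ++ B)).2 h.1
      simpa using this
    | succ j =>
      have := ih (A := A ++ C) (by simpa [List.count_append] using h.2) (j := j)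
        (by simpa using hj)
      simpa [add_assoc] using this

/-- every linear interval of height `k ≥ 2` in `Tam^δ_n` is a left or a
right interval. -/
theorem stmt16 (n k : ℕ) (hk : 2 ≤ k) (δ : ℕ → ℤ) (hδ : IsIncFun δ)
    (P Q : List Bool)
    (hlin : LinearInterval (DyckSet n) (altLE δ) P Q)
    (hht : IntervalHeight (DyckSet n) (altLE δ) P Q k) :
    (∃ A C B : List Bool,
        P = A ++ (List.replicate k false ++ (C ++ B)) ∧
        Q = A ++ (C ++ (List.replicate k false ++ B)) ∧
        IsDeltaExcAt δ P (A.length + k) C) ∨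
    (∃ (A B : List Bool) (Cs : List (List Bool)), Cs.length = k ∧
        P = A ++ false :: (Cs.flatten ++ B) ∧
        Q = A ++ (Cs.flatten ++ false :: B) ∧
        ∀ j < k, IsDeltaExcAt δ P (A.length + 1 + ((Cs.take j).flatten).length)
          (Cs.getD j [])) := by
  obtain ⟨c, rfl, rfl, hc⟩ := hlin.exists_isSaturated hδ hht
  rcases hc.isLeftChain_or_isRightChain hδ hk with ⟨A, C, B, hC, h⟩ | ⟨A, B, Cs, hl, hCs, h⟩
  · refine Or.inl ⟨A, C, B, by simpa using h 0 (by omega), by simpa using h k le_rfl, ?_⟩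
    have hexc := (isDeltaExcAt_append_iff hδ (A ++ List.replicate k false) C B).2
      (by simpa [List.count_append, List.count_replicate] using hC)
    rw [h 0 (by omega)]
    simpa using hexc
  · have h0 : c 0 = A ++ false :: (Cs.flatten ++ B) := by simpa using h 0 (by omega)
    refine Or.inr ⟨A, B, Cs, hl, h0, by simpa [← hl] using h k le_rfl, fun j hj => ?_⟩
    have hexc := IsExcList.isDeltaExcAt hδ (A := A ++ [false]) (B := B) (Cs := Cs)
      (by simpa [List.count_append] using hCs) (hl.symm ▸ hj)
    rw [h0]
    simpa using hexc
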